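/- arXiv:2605.13145 — 5 statements merged into one kernel-verified Lean document; each statement's English description precedes it below -/
import Mathlib

section
/- Let T, K, m be positive integers and L > 0 a real number (playing the role of log T). Let Δ : Fin K → ℝ be nonnegative suboptimality gaps, and let Δ_min > 0 satisfy Δ_min ≤ Δ_a for every arm a with Δ_a > 0. Let A : {1,…,T} → Set (Fin K) be a family of nonempty active-arm sets such that: (i) each A_t contains some arm a* with Δ_{a*} = 0; and (ii) for every t and every a ∈ A_t, Δ_a² ≤ 32·K·L/(m·t) (the clean-event guarantee that each active arm has received at least t·m/K samples and is not yet eliminated). Then: (1) for every t > 32·K·L/(m·Δ_min²), every arm a ∈ A_t has Δ_a = 0; and (2) the cumulative per-step maximal regret satisfies ∑_{t=1}^T max_{a ∈ A_t} Δ_a ≤ 64·K·L/(m·Δ_min). -/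
open Finset

/-!
Put `C = 32KL/m`. A gap is either `0` or at least `Δmin`, so a suboptimal arm that is active at time
`t` has `Δmin² ≤ Δ a² ≤ C / t`, which forces `t ≤ C / Δmin²`. Up to that time the largest active gap
is at most `√(C / t)`, and `∑_{t ≤ N} √(C / t) ≤ 2√(C N)` with `N ≤ C / Δmin²` gives `2C / Δmin`.
-/

theorem sub_div_sqrt_le_two_mul_sqrt_sub_sqrt {x y : ℝ} (hx : 0 ≤ x) (hy : 0 < y) :
    (y - x) / √y ≤ 2 * (√y - √x) := by
  rw [div_le_iff₀ (Real.sqrt_pos.2 hy)]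
  nlinarith [sq_nonneg (√y - √x), Real.sq_sqrt hx, Real.sq_sqrt hy.le]

theorem sum_Icc_one_div_sqrt_le (n : ℕ) : ∑ t ∈ Icc 1 n, 1 / √(t : ℝ) ≤ 2 * √n := by
  induction n with
  | zero => simp
  | succ n ih =>
    have increment : 1 / √((n + 1 : ℕ) : ℝ) ≤ 2 * (√((n + 1 : ℕ) : ℝ) - √(n : ℝ)) := by
      simpa using sub_div_sqrt_le_two_mul_sqrt_sub_sqrt (n.cast_nonneg (α := ℝ))
        (n.cast_add_one_pos (α := ℝ))
    rw [sum_Icc_succ_top (by omega)]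
    linarith

theorem sum_Icc_sqrt_div_le {C : ℝ} (hC : 0 ≤ C) (n : ℕ) :
    ∑ t ∈ Icc 1 n, √(C / t) ≤ 2 * √(C * n) :=
  calc ∑ t ∈ Icc 1 n, √(C / t) = √C * ∑ t ∈ Icc 1 n, 1 / √(t : ℝ) := by
        simp only [Real.sqrt_div hC, mul_sum, mul_one_div]
    _ ≤ √C * (2 * √n) := by gcongr; exact sum_Icc_one_div_sqrt_le n
    _ = 2 * √(C * n) := by rw [Real.sqrt_mul hC]; ring

theorem sum_Icc_le_two_mul_div {C δ : ℝ} (hC : 0 ≤ C) (hδ : 0 < δ) {T : ℕ} {r : ℕ → ℝ}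
    (hr : ∀ t ∈ Icc 1 T, r t ≤ √(C / t))
    (hr_late : ∀ t ∈ Icc 1 T, C / δ ^ 2 < t → r t ≤ 0) :
    ∑ t ∈ Icc 1 T, r t ≤ 2 * C / δ := by
  set N := ⌊C / δ ^ 2⌋₊
  have hN : (N : ℝ) ≤ C / δ ^ 2 := Nat.floor_le (by positivity)
  have termwise : ∀ t ∈ Icc 1 T, r t ≤ if t ≤ N then √(C / t) else 0 := by
    intro t ht
    split_ifs with htN
    · exact hr t ht
    · exact hr_late t ht (Nat.lt_of_floor_lt (not_le.1 htN))
  have early_subset : {t ∈ Icc 1 T | t ≤ N} ⊆ Icc 1 N := by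
    intro t ht
    simp only [mem_filter, mem_Icc] at ht ⊢
    exact ⟨ht.1.1, ht.2⟩
  calc ∑ t ∈ Icc 1 T, r t ≤ ∑ t ∈ Icc 1 T with t ≤ N, √(C / t) := by
        rw [sum_filter]; exact sum_le_sum termwise
    _ ≤ ∑ t ∈ Icc 1 N, √(C / t) :=
        sum_le_sum_of_subset_of_nonneg early_subset fun _ _ _ ↦ Real.sqrt_nonneg _
    _ ≤ 2 * √(C * N) := sum_Icc_sqrt_div_le hC N
    _ ≤ 2 * √(C * (C / δ ^ 2)) := by gcongr
    _ = 2 * √((C / δ) ^ 2) := by congr 2; ring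
    _ = 2 * C / δ := by rw [Real.sqrt_sq (by positivity), mul_div_assoc]

theorem le_div_sq_of_sq_le_div {C δ x t : ℝ} (hδ : 0 < δ) (hδx : δ ≤ x) (ht : 0 < t)
    (hx : x ^ 2 ≤ C / t) : t ≤ C / δ ^ 2 := by
  have sq_le : δ ^ 2 ≤ C / t := (pow_le_pow_left₀ hδ.le hδx 2).trans hx
  rwa [le_div_comm₀ ht (by positivity)]

theorem isLUB_image_biSup_of_nonneg {ι : Type*} {s : Set ι} {f : ι → ℝ} (hs : s.Nonempty)
    (hbdd : BddAbove (f '' s)) (hf : ∀ a ∈ s, 0 ≤ f a) : IsLUB (f '' s) (⨆ a ∈ s, f a) := by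
  have hrange : BddAbove (Set.range fun a : s ↦ f a) := by rwa [← Set.image_eq_range]
  have hempty : sSup ∅ ≤ ⨆ a : s, f a := by
    rw [Real.sSup_empty]
    exact Real.iSup_nonneg fun a ↦ hf a a.2
  rw [← ciSup_subtype_fun hrange hempty]
  exact isLUB_ciSup_set hbdd hs

theorem mase_regret_bound_general {ι : Type*} {C δ : ℝ} (hC : 0 ≤ C) (hδ : 0 < δ) {T : ℕ}
    {Δ : ι → ℝ} (hΔ : ∀ a, 0 ≤ Δ a) (hgap : ∀ a, 0 < Δ a → δ ≤ Δ a)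
    {A : ℕ → Set ι} (hclean : ∀ t ∈ Icc 1 T, ∀ a ∈ A t, Δ a ^ 2 ≤ C / t)
    {r : ℕ → ℝ} (hr : ∀ t ∈ Icc 1 T, IsLUB (Δ '' A t) (r t)) :
    (∀ t ∈ Icc 1 T, C / δ ^ 2 < t → ∀ a ∈ A t, Δ a = 0) ∧
      ∑ t ∈ Icc 1 T, r t ≤ 2 * C / δ := by
  have late_optimal : ∀ t ∈ Icc 1 T, C / δ ^ 2 < t → ∀ a ∈ A t, Δ a = 0 := by
    intro t ht hlate a ha
    by_contra hne
    have htpos : (0 : ℝ) < t := by exact_mod_cast (mem_Icc.1 ht).1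
    have hδa : δ ≤ Δ a := hgap a ((hΔ a).lt_of_ne' hne)
    exact hlate.not_ge (le_div_sq_of_sq_le_div hδ hδa htpos (hclean t ht a ha))
  refine ⟨late_optimal, sum_Icc_le_two_mul_div hC hδ ?_ ?_⟩
  · intro t ht
    exact (isLUB_le_iff (hr t ht)).2
      (Set.forall_mem_image.2 fun a ha ↦ Real.le_sqrt_of_sq_le (hclean t ht a ha))
  · intro t ht hlate
    exact (isLUB_le_iff (hr t ht)).2
      (Set.forall_mem_image.2 fun a ha ↦ (late_optimal t ht hlate a ha).le)

/-- Regret analysis of Multi-Agent Successive Elimination on the clean event: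
if every active arm `a ∈ A_t` satisfies `Δ_a² ≤ 32·K·L/(m·t)` and every active set
contains an optimal arm, then (1) after time `32·K·L/(m·Δ_min²)` only optimal arms
remain active, and (2) `∑_{t=1}^T max_{a ∈ A_t} Δ_a ≤ 64·K·L/(m·Δ_min)`. -/
theorem mase_regret_bound
    (T K m : ℕ) (hT : 0 < T) (hK : 0 < K) (hm : 0 < m)
    (L : ℝ) (hL : 0 < L)
    (Δ : Fin K → ℝ) (hΔ : ∀ a, 0 ≤ Δ a)
    (Δmin : ℝ) (hΔminpos : 0 < Δmin)
    (hΔmin : ∀ a, 0 < Δ a → Δmin ≤ Δ a)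
    (A : ℕ → Finset (Fin K))
    (hopt : ∀ t ∈ Finset.Icc 1 T, ∃ a ∈ A t, Δ a = 0)
    (hclean : ∀ t ∈ Finset.Icc 1 T, ∀ a ∈ A t,
      (Δ a) ^ 2 ≤ 32 * K * L / (m * t)) :
    (∀ t ∈ Finset.Icc 1 T, 32 * K * L / (m * Δmin ^ 2) < t →
        ∀ a ∈ A t, Δ a = 0)
    ∧ ∑ t ∈ Finset.Icc 1 T, (⨆ a ∈ A t, Δ a) ≤ 64 * K * L / (m * Δmin) := by
  have hmax : ∀ t ∈ Icc 1 T, IsLUB (Δ '' A t) (⨆ a ∈ A t, Δ a) := fun t ht ↦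
    isLUB_image_biSup_of_nonneg ((hopt t ht).imp fun _ ha ↦ ha.1)
      ((A t).finite_toSet.image Δ).bddAbove fun a _ ↦ hΔ a
  have hconst : 64 * K * L / (m * Δmin) = 2 * (32 * K * L / m) / Δmin := by ring
  simp only [hconst, ← div_div (32 * K * L) (m : ℝ)] at hclean ⊢
  exact mase_regret_bound_general (by positivity) hΔminpos hΔ hΔmin hclean hmax
end

section
/- Let T, K, m be positive integers, L > 0 a real, and N a positive integer with 1 ≤ N ≤ T and N ≤ T^{2/3}·(K·L)^{1/3}·m^{-1/3} ≤ N + 1 (i.e., N is the exploration length T^{2/3}(KL)^{1/3}m^{-1/3}, assumed to be an integer for simplicity, so N = T^{2/3}(KL)^{1/3}m^{-1/3}). Let μ, μ̂ : Fin K → ℝ with 0 ≤ μ_a ≤ 1 for all a, and suppose |μ_a − μ̂_a| ≤ √(2·K·L/(m·N)) for every a. Let â maximize μ̂ and let μ* = max_a μ_a. Then the total regret of an agent that explores for N steps (incurring per-step regret at most 1) and then plays â for the remaining T − N steps satisfies N + (T − N)·(μ* − μ_â) ≤ (1 + 2√2)·T^{2/3}·(K·L)^{1/3}·m^{-1/3}.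 -/
/-!
The empirically best arm is at most twice the confidence radius worse than the best arm. The
exploration length `N` satisfies `N ^ 3 = T ^ 2 * (K * L) / m`, which is exactly what makes the
confidence radius equal to `√2 * (N / T)`. Exploitation over at most `T` steps therefore costs at
most `2 * √2 * N`, on top of the cost `N` of exploration.
-/

/-- The exploration length `T^{2/3}·(K·L)^{1/3}·m^{-1/3}` balancing the costs of exploration and
exploitation, as a real number: integrality is not built in. -/
noncomputable def explorationLength (T K L m : ℝ) : ℝ :=
  T ^ ((2 : ℝ) / 3) * (K * L) ^ ((1 : ℝ) / 3) * m ^ (-(1 : ℝ) / 3)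

/-- The Hoeffding confidence radius of an empirical mean over the `m * N / K` samples that each arm
receives when `m` agents explore for `N` steps; the algorithm takes `L` to be the logarithm of the
horizon. -/
noncomputable def confidenceRadius (K L m N : ℝ) : ℝ :=
  √(2 * K * L / (m * N))

section EmpiricalMaximizer

variable {ι : Type*} {μ μhat : ι → ℝ} {ε : ℝ} {ahat : ι}

theorem ciSup_sub_le_two_mul_of_abs_sub_le (hclose : ∀ a, |μ a - μhat a| ≤ ε)
    (hmax : ∀ a, μhat a ≤ μhat ahat) : (⨆ a, μ a) - μ ahat ≤ 2 * ε := by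
  have : Nonempty ι := ⟨ahat⟩
  rw [sub_le_iff_le_add]
  refine ciSup_le fun a => ?_
  calc μ a ≤ μhat a + ε := sub_le_iff_le_add'.mp (le_of_abs_le (hclose a))
    _ ≤ μhat ahat + ε := by gcongr; exact hmax a
    _ ≤ 2 * ε + μ ahat := by linarith [neg_le_of_abs_le (hclose ahat)]

theorem explore_exploit_regret_le {T N : ℝ} (hN : 0 ≤ N) (hNT : N ≤ T)
    (hclose : ∀ a, |μ a - μhat a| ≤ ε) (hmax : ∀ a, μhat a ≤ μhat ahat) :
    N + (T - N) * ((⨆ a, μ a) - μ ahat) ≤ N + T * (2 * ε) := by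
  have hε : 0 ≤ ε := (abs_nonneg _).trans (hclose ahat)
  have hgap : (⨆ a, μ a) - μ ahat ≤ 2 * ε := ciSup_sub_le_two_mul_of_abs_sub_le hclose hmax
  calc N + (T - N) * ((⨆ a, μ a) - μ ahat)
      ≤ N + (T - N) * (2 * ε) := by gcongr
    _ ≤ N + T * (2 * ε) := by gcongr; exact sub_le_self T hN

end EmpiricalMaximizer

section ExplorationLength

variable {T K L m : ℝ}

theorem explorationLength_pos (hT : 0 < T) (hKL : 0 < K * L) (hm : 0 < m) :
    0 < explorationLength T K L m := by
  unfold explorationLength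
  positivity

theorem explorationLength_pow_three (hT : 0 ≤ T) (hKL : 0 ≤ K * L) (hm : 0 ≤ m) :
    explorationLength T K L m ^ 3 = T ^ 2 * (K * L) / m := by
  rw [explorationLength, mul_pow, mul_pow, ← Real.rpow_mul_natCast hT,
    ← Real.rpow_mul_natCast hKL, ← Real.rpow_mul_natCast hm]
  norm_num [Real.rpow_neg_one, div_eq_mul_inv]

theorem confidenceRadius_explorationLength (hT : 0 < T) (hKL : 0 < K * L) (hm : 0 < m) :
    confidenceRadius K L m (explorationLength T K L m) =
      √2 * (explorationLength T K L m / T) := by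
  have hcube := explorationLength_pow_three hT.le hKL.le hm.le
  have hN := explorationLength_pos hT hKL hm
  set N := explorationLength T K L m
  have hradicand : 2 * K * L / (m * N) = 2 * (N / T) ^ 2 := by
    field_simp at hcube ⊢
    linarith
  rw [confidenceRadius, hradicand, Real.sqrt_mul zero_le_two, Real.sqrt_sq (by positivity)]

end ExplorationLength

theorem mafaee_regret_bound_general {ι : Type*} {T K L m N : ℝ} (hT : 0 < T) (hKL : 0 < K * L)
    (hm : 0 < m) (hN : N = explorationLength T K L m) (hNT : N ≤ T) {μ μhat : ι → ℝ}
    (hclose : ∀ a, |μ a - μhat a| ≤ confidenceRadius K L m N)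
    {ahat : ι} (hmax : ∀ a, μhat a ≤ μhat ahat) :
    N + (T - N) * ((⨆ a, μ a) - μ ahat) ≤ (1 + 2 * √2) * explorationLength T K L m := by
  have hN_nonneg : 0 ≤ N := hN ▸ (explorationLength_pos hT hKL hm).le
  have hradius : confidenceRadius K L m N = √2 * (N / T) :=
    hN ▸ confidenceRadius_explorationLength hT hKL hm
  calc N + (T - N) * ((⨆ a, μ a) - μ ahat)
      ≤ N + T * (2 * confidenceRadius K L m N) :=
        explore_exploit_regret_le hN_nonneg hNT hclose hmax
    _ = (1 + 2 * √2) * N := by rw [hradius]; field_simp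
    _ = (1 + 2 * √2) * explorationLength T K L m := by rw [hN]

/-- Regret bound for Multi-Agent Fixed Arm Explore-Exploit on the clean event:
with exploration length `N = T^{2/3}·(K·L)^{1/3}·m^{-1/3}` (assumed an integer),
empirical means within `√(2·K·L/(m·N))` of true means, and `â` the empirically
best arm, the total regret `N + (T − N)·(μ* − μ_â)` is at most
`(1 + 2√2)·T^{2/3}·(K·L)^{1/3}·m^{-1/3}`. -/
theorem mafaee_regret_bound
    (T K m : ℕ) (hT : 0 < T) (hK : 0 < K) (hm : 0 < m)
    (L : ℝ) (hL : 0 < L)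
    (N : ℕ) (hN1 : 1 ≤ N) (hNT : N ≤ T)
    (hNlo : (N : ℝ) ≤ (T : ℝ) ^ ((2 : ℝ) / 3) * ((K : ℝ) * L) ^ ((1 : ℝ) / 3)
        * (m : ℝ) ^ (-(1 : ℝ) / 3))
    (hNhi : (T : ℝ) ^ ((2 : ℝ) / 3) * ((K : ℝ) * L) ^ ((1 : ℝ) / 3)
        * (m : ℝ) ^ (-(1 : ℝ) / 3) ≤ (N : ℝ) + 1)
    (hNeq : (N : ℝ) = (T : ℝ) ^ ((2 : ℝ) / 3) * ((K : ℝ) * L) ^ ((1 : ℝ) / 3)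
        * (m : ℝ) ^ (-(1 : ℝ) / 3))
    (μ μhat : Fin K → ℝ) (hμ : ∀ a, 0 ≤ μ a ∧ μ a ≤ 1)
    (hclose : ∀ a, |μ a - μhat a| ≤ Real.sqrt (2 * K * L / (m * N)))
    (ahat : Fin K) (hmax : ∀ a, μhat a ≤ μhat ahat) :
    (N : ℝ) + ((T : ℝ) - N) * ((⨆ a, μ a) - μ ahat)
      ≤ (1 + 2 * Real.sqrt 2)
          * ((T : ℝ) ^ ((2 : ℝ) / 3) * ((K : ℝ) * L) ^ ((1 : ℝ) / 3)
              * (m : ℝ) ^ (-(1 : ℝ) / 3)) := by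
  exact mafaee_regret_bound_general (Nat.cast_pos.mpr hT) (mul_pos (Nat.cast_pos.mpr hK) hL)
    (Nat.cast_pos.mpr hm) hNeq (Nat.cast_le.mpr hNT) hclose hmax
end

section
/- Let T, K, m be positive integers, L > 0 a real, Δ : Fin K → ℝ a nonnegative gap function, and a : {1,…,T} → Fin K a sequence of arm choices (all m agents play the chosen arm simultaneously, so the sample count of arm b at the start of step t is n_b(t) = m·|{s < t : a_s = b}|). Suppose that for every t ∈ {1,…,T} with n_{a_t}(t) > 0 we have Δ_{a_t} ≤ 2·√(2·L/n_{a_t}(t)). Then for every arm b with Δ_b > 0, the total sample count satisfies n_b(T+1) ≤ 8·L/Δ_b² + m. -/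
open Finset

/-!
Look at the last step `t` at which arm `b` is played. The clean-event inequality at that step,
solved for the sample count, gives `n_b(t) ≤ 8 L / Δ_b²`, and step `t` adds `m` more samples,
after which the count no longer changes.
-/

/-- The number `n_b(t)` of samples of arm `b` collected before step `t`, when each of `m` agents
plays arm `a s` at step `s`. Steps are numbered from `1`, so the value of `a` at `0` is ignored. -/
def sampleCount {ι : Type*} [DecidableEq ι] (m : ℕ) (a : ℕ → ι) (b : ι) (t : ℕ) : ℕ :=
  m * #{s ∈ Ico 1 t | a s = b}

theorem exists_mem_card_filter_lt_add_one {α : Type*} [LinearOrder α] {s : Finset α}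
    (hs : s.Nonempty) : ∃ t ∈ s, #{u ∈ s | u < t} + 1 = #s := by
  have hmax : s.max' hs ∈ s := s.max'_mem hs
  have filter_eq_erase : {u ∈ s | u < s.max' hs} = s.erase (s.max' hs) := by
    ext u
    rw [mem_filter, mem_erase, and_comm]
    exact and_congr_left fun hu ↦ (s.le_max' u hu).lt_iff_ne
  exact ⟨s.max' hs, hmax, by rw [filter_eq_erase, card_erase_add_one hmax]⟩

theorem le_div_sq_of_le_sqrt_div {c x δ : ℝ} (hx : 0 < x) (hδ : 0 < δ) (h : δ ≤ √(c / x)) :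
    x ≤ c / δ ^ 2 :=
  (le_div_comm₀ (pow_pos hδ 2) hx).1 ((Real.le_sqrt' hδ).1 h)

theorem two_mul_sqrt_two_mul_div (L x : ℝ) : 2 * √(2 * L / x) = √(8 * L / x) := by
  rw [show 8 * L / x = 2 ^ 2 * (2 * L / x) by ring, Real.sqrt_mul (sq_nonneg 2),
    Real.sqrt_sq zero_le_two]

section SampleCount

variable {ι : Type*} [DecidableEq ι] (m : ℕ) (a : ℕ → ι) (b : ι)

theorem sampleCount_succ_eq_zero_or_exists_last_play (T : ℕ) :
    sampleCount m a b (T + 1) = 0 ∨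
      ∃ t ∈ Icc 1 T, a t = b ∧ sampleCount m a b (T + 1) = sampleCount m a b t + m := by
  rcases {s ∈ Ico 1 (T + 1) | a s = b}.eq_empty_or_nonempty with hempty | hne
  · left
    rw [sampleCount, hempty, card_empty, mul_zero]
  · right
    obtain ⟨t, ht, hcard⟩ := exists_mem_card_filter_lt_add_one hne
    obtain ⟨htT, hat⟩ := mem_filter.1 ht
    have plays_before : {u ∈ {s ∈ Ico 1 (T + 1) | a s = b} | u < t} = {s ∈ Ico 1 t | a s = b} := by
      ext u
      simp only [mem_filter, mem_Ico] at htT ⊢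
      lia
    refine ⟨t, by simpa only [mem_Icc, mem_Ico, Nat.lt_succ_iff] using htT, hat, ?_⟩
    rw [sampleCount, sampleCount, ← hcard, plays_before, mul_add_one]

variable {m a b}

theorem maucb_sample_count_bound_general {T : ℕ} {L δ : ℝ} (hL : 0 ≤ L) (hδ : 0 < δ)
    (hclean : ∀ t ∈ Icc 1 T, a t = b → 0 < sampleCount m a b t →
      δ ≤ 2 * √(2 * L / sampleCount m a b t)) :
    (sampleCount m a b (T + 1) : ℝ) ≤ 8 * L / δ ^ 2 + m := by
  have hbound : 0 ≤ 8 * L / δ ^ 2 := by positivity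
  rcases sampleCount_succ_eq_zero_or_exists_last_play m a b T with hzero | ⟨t, ht, hat, hlast⟩
  · rw [hzero, Nat.cast_zero]
    positivity
  · rw [hlast, Nat.cast_add]
    gcongr
    rcases (sampleCount m a b t).eq_zero_or_pos with hzero | hpos
    · rwa [hzero, Nat.cast_zero]
    · have hgap := hclean t ht hat hpos
      rw [two_mul_sqrt_two_mul_div] at hgap
      exact le_div_sq_of_le_sqrt_div (Nat.cast_pos.2 hpos) hδ hgap

end SampleCount

/-- Sample-count bound for Multi-Agent UCB on the clean event: if whenever arm `a_t`
is chosen with `n_{a_t}(t) > 0` prior samples its gap satisfies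
`Δ_{a_t} ≤ 2·√(2·L/n_{a_t}(t))`, then every suboptimal arm `b` (with `Δ_b > 0`)
satisfies `n_b(T+1) ≤ 8·L/Δ_b² + m`. -/
theorem maucb_sample_count_bound
    (T K m : ℕ) (hT : 0 < T) (hK : 0 < K) (hm : 0 < m)
    (L : ℝ) (hL : 0 < L)
    (Δ : Fin K → ℝ) (hΔ : ∀ b, 0 ≤ Δ b)
    (a : ℕ → Fin K)
    (n : Fin K → ℕ → ℕ)
    (hn : ∀ b t, n b t = m * ((Finset.Ico 1 t).filter (fun s => a s = b)).card)
    (hclean : ∀ t ∈ Finset.Icc 1 T, 0 < n (a t) t →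
        Δ (a t) ≤ 2 * Real.sqrt (2 * L / (n (a t) t)))
    (b : Fin K) (hb : 0 < Δ b) :
    (n b (T + 1) : ℝ) ≤ 8 * L / (Δ b) ^ 2 + m := by
  obtain rfl : n = sampleCount m a := funext₂ hn
  exact maucb_sample_count_bound_general hL.le hb (by rintro t ht rfl; exact hclean t ht)
end

section
/- Let T, K, m be positive integers, L > 0 a real, Δ : Fin K → ℝ with 0 ≤ Δ_b ≤ 1 for all b, and a : {1,…,T} → Fin K a sequence of arm choices with sample counts n_b(t) = m·|{s < t : a_s = b}|. Suppose that for every t ∈ {1,…,T} with n_{a_t}(t) > 0 we have Δ_{a_t} ≤ 2·√(2·L/n_{a_t}(t)). Then the per-agent cumulative regret satisfies ∑_{t=1}^T Δ_{a_t} ≤ ∑_{b : Δ_b > 0} 8·L/(m·Δ_b) + K. -/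
open Finset

/-!
Group the regret by arm and look at the last time an arm `b` with `Δ b > 0` is played. Every earlier
play of `b` is then counted in the confidence radius, so the clean-event inequality at that single
step bounds the regret of the earlier plays by `8 * L / (m * Δ b)`; the last play itself costs a
further `Δ b`.
-/

theorem exists_card_filter_Icc_eq_card_filter_Ico_add_one {α : Type*} [LinearOrder α]
    [LocallyFiniteOrder α] {p : α → Prop} [DecidablePred p] {x y : α}
    (h : ({s ∈ Icc x y | p s}).Nonempty) :
    ∃ t ∈ Icc x y, p t ∧ #{s ∈ Icc x y | p s} = #{s ∈ Ico x t | p s} + 1 := by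
  obtain ⟨t, ht, ht_max⟩ := exists_max_image _ id h
  obtain ⟨ht_mem, hpt⟩ := mem_filter.mp ht
  have erase_last : ({s ∈ Icc x y | p s}).erase t = {s ∈ Ico x t | p s} := by
    ext s
    simp only [mem_erase, mem_filter, mem_Icc, mem_Ico, id_eq] at ht_mem ht_max ⊢
    constructor
    · rintro ⟨hne, hs, hps⟩
      exact ⟨⟨hs.1, lt_of_le_of_ne (ht_max s ⟨hs, hps⟩) hne⟩, hps⟩
    · rintro ⟨⟨hxs, hst⟩, hps⟩
      exact ⟨hst.ne, ⟨hxs, hst.le.trans ht_mem.2⟩, hps⟩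
  exact ⟨t, ht_mem, hpt, by rw [← erase_last, card_erase_add_one ht]⟩

theorem sum_comp_le_sum_filter_pos_card_mul {ι κ : Type*} [Fintype κ] [DecidableEq κ]
    (s : Finset ι) (g : ι → κ) (f : κ → ℝ) :
    ∑ i ∈ s, f (g i) ≤ ∑ b with 0 < f b, (#{i ∈ s | g i = b} : ℝ) * f b := by
  simp only [← sum_fiberwise' s g f, sum_const, nsmul_eq_mul, sum_filter]
  gcongr with b
  split_ifs with hb
  · rfl
  · exact mul_nonpos_of_nonneg_of_nonpos (Nat.cast_nonneg _) (not_lt.mp hb)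

theorem mul_le_div_of_le_two_mul_sqrt {δ L N : ℝ} (hδ : 0 < δ) (hN : 0 < N)
    (h : δ ≤ 2 * √(2 * L / N)) : N * δ ≤ 8 * L / δ := by
  have half_sq_le : (δ / 2) ^ 2 ≤ 2 * L / N := (Real.le_sqrt' (half_pos hδ)).mp (by linarith)
  rw [le_div_iff₀ hN] at half_sq_le
  rw [le_div_iff₀ hδ]
  linarith

theorem card_filter_mul_le_of_forall_le_two_mul_sqrt {p : ℕ → Prop} [DecidablePred p]
    {T m : ℕ} {L δ : ℝ} (hm : 0 < m) (hL : 0 ≤ L) (hδ : 0 < δ)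
    (h : ∀ t ∈ Icc 1 T, p t → 0 < m * #{s ∈ Ico 1 t | p s} →
      δ ≤ 2 * √(2 * L / (m * #{s ∈ Ico 1 t | p s} : ℕ))) :
    (#{t ∈ Icc 1 T | p t} : ℝ) * δ ≤ 8 * L / (m * δ) + δ := by
  have bound_nonneg : 0 ≤ 8 * L / (m * δ) := by positivity
  rcases eq_empty_or_nonempty {t ∈ Icc 1 T | p t} with never | played
  · rw [never, card_empty, Nat.cast_zero, zero_mul]
    positivity
  obtain ⟨t, ht, hpt, card_eq⟩ := exists_card_filter_Icc_eq_card_filter_Ico_add_one played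
  suffices earlier : (#{s ∈ Ico 1 t | p s} : ℝ) * δ ≤ 8 * L / (m * δ) by
    rw [card_eq, Nat.cast_add_one, add_one_mul]
    gcongr
  rcases Nat.eq_zero_or_pos #{s ∈ Ico 1 t | p s} with first | later
  · rwa [first, Nat.cast_zero, zero_mul]
  have samples_pos : 0 < m * #{s ∈ Ico 1 t | p s} := Nat.mul_pos hm later
  have samples_mul_le :=
    mul_le_div_of_le_two_mul_sqrt hδ (Nat.cast_pos.mpr samples_pos) (h t ht hpt samples_pos)
  rw [mul_comm (m : ℝ) δ, ← div_div, le_div_iff₀' (Nat.cast_pos.mpr hm), ← mul_assoc]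
  exact_mod_cast samples_mul_le

theorem sum_filter_le_card_of_le_one {κ : Type*} [Fintype κ] (p : κ → Prop) [DecidablePred p]
    {f : κ → ℝ} (hf : ∀ b, f b ≤ 1) : ∑ b with p b, f b ≤ Fintype.card κ :=
  calc ∑ b with p b, f b
    _ ≤ #{b | p b} • (1 : ℝ) := sum_le_card_nsmul _ _ _ fun b _ ↦ hf b
    _ ≤ Fintype.card κ := by simpa using card_filter_le univ p

theorem maucb_regret_bound_general {κ : Type*} [Fintype κ] [DecidableEq κ]
    (T m : ℕ) (hm : 0 < m) (L : ℝ) (hL : 0 ≤ L) (Δ : κ → ℝ) (a : ℕ → κ) (n : κ → ℕ → ℕ)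
    (hn : ∀ b t, n b t = m * #{s ∈ Ico 1 t | a s = b})
    (hclean : ∀ t ∈ Icc 1 T, 0 < n (a t) t → Δ (a t) ≤ 2 * √(2 * L / n (a t) t)) :
    ∑ t ∈ Icc 1 T, Δ (a t)
      ≤ (∑ b with 0 < Δ b, 8 * L / (m * Δ b)) + ∑ b with 0 < Δ b, Δ b := by
  calc ∑ t ∈ Icc 1 T, Δ (a t)
    _ ≤ ∑ b with 0 < Δ b, (#{t ∈ Icc 1 T | a t = b} : ℝ) * Δ b :=
      sum_comp_le_sum_filter_pos_card_mul _ a Δ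
    _ ≤ ∑ b with 0 < Δ b, (8 * L / (m * Δ b) + Δ b) := by
      refine sum_le_sum fun b hb ↦
        card_filter_mul_le_of_forall_le_two_mul_sqrt hm hL (mem_filter.mp hb).2 ?_
      rintro t ht rfl
      rw [← hn]
      exact hclean t ht
    _ = _ := sum_add_distrib

/-- Per-agent regret bound for Multi-Agent UCB on the clean event:
`∑_{t=1}^T Δ_{a_t} ≤ ∑_{b : Δ_b > 0} 8·L/(m·Δ_b) + K`. -/
theorem maucb_regret_bound
    (T K m : ℕ) (hT : 0 < T) (hK : 0 < K) (hm : 0 < m)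
    (L : ℝ) (hL : 0 < L)
    (Δ : Fin K → ℝ) (hΔ : ∀ b, 0 ≤ Δ b ∧ Δ b ≤ 1)
    (a : ℕ → Fin K)
    (n : Fin K → ℕ → ℕ)
    (hn : ∀ b t, n b t = m * ((Finset.Ico 1 t).filter (fun s => a s = b)).card)
    (hclean : ∀ t ∈ Finset.Icc 1 T, 0 < n (a t) t →
        Δ (a t) ≤ 2 * Real.sqrt (2 * L / (n (a t) t))) :
    ∑ t ∈ Finset.Icc 1 T, Δ (a t)
      ≤ (∑ b ∈ Finset.univ.filter (fun b => 0 < Δ b), 8 * L / (m * Δ b)) + K := by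
  refine (maucb_regret_bound_general T m hm L hL.le Δ a n hn hclean).trans (add_le_add le_rfl ?_)
  simpa using sum_filter_le_card_of_le_one (0 < Δ ·) fun b ↦ (hΔ b).2
end

section
/- Let T, K, m be positive integers and let a : {1,…,T} → Fin K be a sequence of arm choices, with sample counts n_b(t) = m·|{s < t : a_s = b}| (all m agents play the chosen arm simultaneously). Then ∑_{t=1}^T min(√(1/n_{a_t}(t)), 1) ≤ K + 2·√(K·T/m), where the minimum is taken to be 1 when n_{a_t}(t) = 0. -/
open Finset

/-!
Grouping the steps by arm, the step at which an arm is played for the `(k + 1)`-st time sees exactly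
`k` earlier plays, so an arm played `c` times contributes the sum of the widths at `0, m, …, (c-1)m`
samples. The first of these is `1`, and the others telescope against `k ↦ 2 √(k / m)`, which gives
at most `1 + 2 √(c / m)`. By Cauchy–Schwarz, the sum over the arms is largest when the plays are
spread evenly.
-/

lemma filter_Icc_lt_and {α : Type*} [Preorder α] [LocallyFiniteOrder α] [DecidableLT α]
    {u t v : α} (htv : t ≤ v) (p : α → Prop) [DecidablePred p] :
    {r ∈ Icc u v | r < t ∧ p r} = {r ∈ Ico u t | p r} := by
  ext r
  simp only [mem_filter, mem_Icc, mem_Ico]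
  exact ⟨fun ⟨⟨hur, _⟩, hrt, hp⟩ => ⟨⟨hur, hrt⟩, hp⟩,
    fun ⟨⟨hur, hrt⟩, hp⟩ => ⟨⟨hur, hrt.le.trans htv⟩, hrt, hp⟩⟩

section CountBefore

variable {τ ι M : Type*} [LinearOrder τ] [AddCommMonoid M]

lemma sum_comp_card_filter_lt (s : Finset τ) (f : ℕ → M) :
    ∑ t ∈ s, f #{r ∈ s | r < t} = ∑ k ∈ range #s, f k := by
  induction s using Finset.induction_on_max with
  | empty => simp
  | insert x s hx ih =>
    have hxs : x ∉ s := fun h => (hx x h).false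
    have below_max : {r ∈ insert x s | r < x} = s := by
      rw [filter_insert, if_neg (lt_irrefl x), filter_true_of_mem hx]
    have below_old : ∀ t ∈ s, {r ∈ insert x s | r < t} = {r ∈ s | r < t} := fun t ht => by
      rw [filter_insert, if_neg (hx t ht).asymm]
    rw [sum_insert hxs, card_insert_of_notMem hxs, sum_range_succ, below_max, add_comm, ← ih]
    congr 1
    exact sum_congr rfl fun t ht => by rw [below_old t ht]

lemma sum_comp_card_filter_lt_and_eq [DecidableEq ι] {s : Finset τ} {B : Finset ι} {a : τ → ι}
    (ha : ∀ t ∈ s, a t ∈ B) (f : ℕ → M) :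
    ∑ t ∈ s, f #{r ∈ s | r < t ∧ a r = a t} =
      ∑ b ∈ B, ∑ k ∈ range #{r ∈ s | a r = b}, f k := by
  rw [← sum_fiberwise_of_maps_to ha]
  refine sum_congr rfl fun b _ => ?_
  rw [← sum_comp_card_filter_lt]
  refine sum_congr rfl fun t ht => ?_
  rw [filter_filter, (mem_filter.mp ht).2]
  simp only [and_comm]

end CountBefore

section SquareRoots

lemma sub_div_sqrt_le {x y : ℝ} (hx : 0 < x) (hy : 0 ≤ y) : (x - y) / √x ≤ 2 * (√x - √y) := by
  rw [div_le_iff₀ (Real.sqrt_pos.2 hx)]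
  nlinarith [sq_nonneg (√x - √y), Real.sq_sqrt hx.le, Real.sq_sqrt hy]

lemma sqrt_one_div_mul_succ_le {w : ℝ} (hw : 0 < w) (k : ℕ) :
    √(1 / (w * (k + 1 : ℕ))) ≤ 2 * √((k + 1 : ℕ) / w) - 2 * √(k / w) := by
  have hx : (0 : ℝ) < (k + 1 : ℕ) / w := by positivity
  have step : ((k + 1 : ℕ) / w - k / w : ℝ) = 1 / w := by rw [← sub_div]; simp
  have radicand : 1 / (w * (k + 1 : ℕ)) = (1 / w) ^ 2 / ((k + 1 : ℕ) / w) := by field_simp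
  calc √(1 / (w * (k + 1 : ℕ)))
      = ((k + 1 : ℕ) / w - k / w) / √((k + 1 : ℕ) / w) := by
        rw [step, radicand, Real.sqrt_div (sq_nonneg _), Real.sqrt_sq (by positivity)]
    _ ≤ 2 * (√((k + 1 : ℕ) / w) - √(k / w)) := sub_div_sqrt_le hx (by positivity)
    _ = 2 * √((k + 1 : ℕ) / w) - 2 * √(k / w) := mul_sub _ _ _

lemma sum_range_sqrt_one_div_mul_succ_le {w : ℝ} (hw : 0 < w) (c : ℕ) :
    ∑ k ∈ range c, √(1 / (w * (k + 1 : ℕ))) ≤ 2 * √(c / w) :=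
  calc ∑ k ∈ range c, √(1 / (w * (k + 1 : ℕ)))
      ≤ ∑ k ∈ range c, (2 * √((k + 1 : ℕ) / w) - 2 * √(k / w)) :=
        sum_le_sum fun k _ => sqrt_one_div_mul_succ_le hw k
    _ = 2 * √(c / w) := by rw [sum_range_sub fun k : ℕ => 2 * √(k / w)]; simp

lemma sum_sqrt_le_sqrt_card_mul_sum {ι : Type*} {s : Finset ι} {f : ι → ℝ}
    (hf : ∀ i ∈ s, 0 ≤ f i) : ∑ i ∈ s, √(f i) ≤ √(#s * ∑ i ∈ s, f i) := by
  apply Real.le_sqrt_of_sq_le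
  calc (∑ i ∈ s, √(f i)) ^ 2 ≤ #s * ∑ i ∈ s, √(f i) ^ 2 := sq_sum_le_card_mul_sum_sq
    _ = #s * ∑ i ∈ s, f i := by rw [sum_congr rfl fun i hi => Real.sq_sqrt (hf i hi)]

end SquareRoots

/-- The confidence width of an arm with `x` samples, capped at `1`; the case split is needed because
`1 / 0 = 0` would make the width of an unsampled arm `0` instead of `1`. The number of samples is
real so that each play may count for an arbitrary positive amount of them. -/
noncomputable def cappedWidth (x : ℝ) : ℝ :=
  if x = 0 then 1 else min √(1 / x) 1

lemma cappedWidth_zero : cappedWidth 0 = 1 := if_pos rfl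

lemma cappedWidth_le_sqrt {x : ℝ} (hx : x ≠ 0) : cappedWidth x ≤ √(1 / x) :=
  (if_neg hx).trans_le (min_le_left _ _)

lemma sum_range_cappedWidth_le {w : ℝ} (hw : 0 < w) (c : ℕ) :
    ∑ k ∈ range c, cappedWidth (w * k) ≤ 1 + 2 * √(c / w) := by
  rcases c with _ | c
  · simp
  calc ∑ k ∈ range (c + 1), cappedWidth (w * k)
      = 1 + ∑ k ∈ range c, cappedWidth (w * (k + 1 : ℕ)) := by
        rw [sum_range_succ', Nat.cast_zero, mul_zero, cappedWidth_zero, add_comm]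
    _ ≤ 1 + ∑ k ∈ range c, √(1 / (w * (k + 1 : ℕ))) := by
        gcongr
        exact cappedWidth_le_sqrt (by positivity)
    _ ≤ 1 + 2 * √(c / w) := by
        gcongr
        exact sum_range_sqrt_one_div_mul_succ_le hw c
    _ ≤ 1 + 2 * √((c + 1 : ℕ) / w) := by
        gcongr
        exact c.le_succ

theorem mats_sum_bound_general {τ ι : Type*} [LinearOrder τ] [DecidableEq ι] {w : ℝ} (hw : 0 < w)
    {s : Finset τ} {B : Finset ι} {a : τ → ι} (ha : ∀ t ∈ s, a t ∈ B) :
    ∑ t ∈ s, cappedWidth (w * #{r ∈ s | r < t ∧ a r = a t}) ≤ #B + 2 * √(#B * #s / w) := by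
  have total_plays : ∑ b ∈ B, (#{r ∈ s | a r = b} : ℝ) / w = #s / w := by
    rw [← sum_div, card_eq_sum_card_fiberwise ha, Nat.cast_sum]
  calc ∑ t ∈ s, cappedWidth (w * #{r ∈ s | r < t ∧ a r = a t})
      = ∑ b ∈ B, ∑ k ∈ range #{r ∈ s | a r = b}, cappedWidth (w * k) :=
        sum_comp_card_filter_lt_and_eq ha fun k => cappedWidth (w * k)
    _ ≤ ∑ b ∈ B, (1 + 2 * √(#{r ∈ s | a r = b} / w)) :=
        sum_le_sum fun b _ => sum_range_cappedWidth_le hw _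
    _ = #B + 2 * ∑ b ∈ B, √(#{r ∈ s | a r = b} / w) := by
        rw [sum_add_distrib, ← mul_sum, sum_const, nsmul_one]
    _ ≤ #B + 2 * √(#B * ∑ b ∈ B, (#{r ∈ s | a r = b} : ℝ) / w) := by
        gcongr
        exact sum_sqrt_le_sqrt_card_mul_sum fun b _ => by positivity
    _ = #B + 2 * √(#B * #s / w) := by rw [total_plays, mul_div_assoc]

/-- Key summation bound in the analysis of Multi-Agent Thompson Sampling:
`∑_{t=1}^T min(√(1/n_{a_t}(t)), 1) ≤ K + 2·√(K·T/m)`, where the minimum is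
taken to be `1` when `n_{a_t}(t) = 0`. -/
theorem mats_sum_bound
    (T K m : ℕ) (hT : 0 < T) (hK : 0 < K) (hm : 0 < m)
    (a : ℕ → Fin K)
    (n : Fin K → ℕ → ℕ)
    (hn : ∀ b t, n b t = m * ((Finset.Ico 1 t).filter (fun s => a s = b)).card) :
    ∑ t ∈ Finset.Icc 1 T,
        (if n (a t) t = 0 then (1 : ℝ)
         else min (Real.sqrt (1 / (n (a t) t))) 1)
      ≤ K + 2 * Real.sqrt (K * T / m) := by
  have samples : ∀ t ∈ Icc 1 T, (n (a t) t : ℝ) = m * #{r ∈ Icc 1 T | r < t ∧ a r = a t} :=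
    fun t ht => by rw [hn, filter_Icc_lt_and (mem_Icc.mp ht).2, Nat.cast_mul]
  calc _ = ∑ t ∈ Icc 1 T, cappedWidth (m * #{r ∈ Icc 1 T | r < t ∧ a r = a t}) :=
        sum_congr rfl fun t ht => by simp only [← samples t ht, cappedWidth, Nat.cast_eq_zero]
    _ ≤ K + 2 * √(K * T / m) := by
        simpa using mats_sum_bound_general (s := Icc 1 T) (Nat.cast_pos.2 hm)
          fun t _ => mem_univ (a t)
end
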